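/- Let c > 0, δ = 1 − ρ², and C = (μ²/2)·δ. Define J(w,v,t) = 1 − (e^{−cw}/c)·f(v,t)^{1/δ} for w ∈ ℝ, v > 0, t < T, where f is the explicit Whittaker-function solution. Then for every w ∈ ℝ, x > 0, v > 0, and t < T, the Hamilton–Jacobi–Bellman equation holds: ∂J/∂t + (σ²v/2)·∂²J/∂v² + k(Θ−v)·∂J/∂v + sup_{a∈ℝ} [ a·μ·x·∂J/∂w + (a²x²v/2)·∂²J/∂w² + ρσv·a·x·∂²J/∂w∂v ] = 0, and the supremum is attained at a* = (1/(c·x)) · ( μ/v + (ρσ/δ)·((η+λ+1/2)/v)·M_{λ+1,η}(Ψ(v,t))/M_{λ,η}(Ψ(v,t)) ). -/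

import Mathlib

/-!
The function `f` is self-similar: `f v t = G (Ψ v t)` with
`G z = K e^{-z} z^p M(a, b, z)`, where `a = η - λ + 1/2`, `b = 1 + 2η`, `p = b - a = η + λ + 1/2`
and `K` is the quotient of Gamma values. As `C > 0`, one has `η > |λ + 1/2|`, hence `a > 1`,
`b > 0`, and `G > 0` on `z > 0`.

Comparing power series coefficients (`kummerM_facts`) gives Kummer's equation and the contiguous
relation `z M'(a) = (b - a) M(a - 1) + (a - b + z) M(a)`. In terms of `G` (`profile_facts`), the
first becomes `z² G'' + (z² - 2λz) G' = (2C/σ²) G`, and the second becomes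
`z G'/G = p M_{λ+1,η} / M_{λ,η}`.

In the Hamilton-Jacobi-Bellman equation the bracket is a concave quadratic in `a`, because
`∂²J/∂w² < 0`. Its vertex is `(1/(cx)) (μ/v + (ρσ/δ) ∂ᵥf/f)`, which is the stated `a*` by the
formula for `z G'/G`. After inserting the maximal value, the choice of the exponent `1/δ` with
`δ = 1 - ρ²` cancels the terms in `(∂ᵥf)²`, so the equation becomes the linear equation
`∂ₜf + (σ²v/2) ∂ᵥᵥf - (λσ² + kv) ∂ᵥf - (C/v) f = 0`. Since `∂ᵥΨ = Ψ/v` and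
`∂ₜΨ = Ψ (k + σ²Ψ/(2v))`, this is the equation for `G` (`hjb_algebra`).
-/

/-- The Kummer confluent hypergeometric function
`M(a,b,z) = ∑ ((a)_n / (b)_n) zⁿ/n!`. -/
noncomputable def kummerM (a b z : ℝ) : ℝ :=
  ∑' n : ℕ, ((ascPochhammer ℝ n).eval a / (ascPochhammer ℝ n).eval b) * z ^ n / (n.factorial : ℝ)

/-- The Whittaker function `M_{κ,η}(z) = e^{-z/2} z^{η+1/2} M(η-κ+1/2, 1+2η, z)`. -/
noncomputable def whittakerM (κ η z : ℝ) : ℝ :=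
  Real.exp (-z / 2) * z ^ (η + 1/2) * kummerM (η - κ + 1/2) (1 + 2*η) z

/-- Termwise differentiation of an everywhere convergent power series with nonnegative
coefficients; the derived series has the same two properties, so the lemma can be iterated. -/
lemma powerSeries_deriv (u : ℕ → ℝ) (hu0 : ∀ n, 0 ≤ u n)
    (hu : ∀ r : ℝ, Summable fun n => u n * r ^ n) :
    (∀ r : ℝ, Summable fun n : ℕ => ((n + 1 : ℝ) * u (n + 1)) * r ^ n) ∧
    ∀ z : ℝ, HasDerivAt (fun y => ∑' n, u n * y ^ n)
      (∑' n : ℕ, ((n + 1 : ℝ) * u (n + 1)) * z ^ n) z := by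
  have hs : ∀ r : ℝ, Summable fun n : ℕ => ((n + 1 : ℝ) * u (n + 1)) * r ^ n := by
    intro r
    set R := max |r| 1
    have hR1 : 1 ≤ R := le_max_right _ _
    have hRr : |r| ≤ R := le_max_left _ _
    -- the factor `n + 1` is absorbed by doubling the radius
    refine Summable.of_norm_bounded ((summable_nat_add_iff 1).2 (hu (2 * R))) fun n => ?_
    have h2 : (n + 1 : ℝ) ≤ 2 ^ (n + 1) := by
      exact_mod_cast (Nat.lt_two_pow_self (n := n + 1)).le
    have h3 : |r| ^ n ≤ R ^ (n + 1) :=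
      (pow_le_pow_left₀ (abs_nonneg r) hRr n).trans (pow_le_pow_right₀ hR1 (Nat.le_succ n))
    rw [Real.norm_eq_abs, abs_mul, abs_mul, abs_pow, abs_of_nonneg (hu0 _),
      abs_of_nonneg (by positivity : (0 : ℝ) ≤ n + 1), mul_pow]
    calc (n + 1 : ℝ) * u (n + 1) * |r| ^ n ≤ 2 ^ (n + 1) * u (n + 1) * R ^ (n + 1) := by
          have := hu0 (n + 1)
          gcongr
      _ = _ := by ring
  refine ⟨hs, fun z => ?_⟩
  set B := |z| + 1
  have hB : 0 < B := by positivity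
  have hs' : Summable fun n : ℕ => (n : ℝ) * u n * B ^ (n - 1) := by
    refine (summable_nat_add_iff 1).1 ((hs B).congr fun n => ?_)
    simp
  have hs2 : Summable fun n : ℕ => (n : ℝ) * u n * z ^ (n - 1) := by
    refine (summable_nat_add_iff 1).1 ((hs z).congr fun n => ?_)
    simp
  have key := hasDerivAt_tsum_of_isPreconnected (g := fun n y => u n * y ^ n)
    (g' := fun n y => (n : ℝ) * u n * y ^ (n - 1)) (t := Metric.ball (0 : ℝ) B) (y₀ := z)
    (y := z) hs' Metric.isOpen_ball (convex_ball _ _).isPreconnected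
    (fun n y _ => ((hasDerivAt_pow n y).const_mul (u n)).congr_deriv (by ring))
    (fun n y hy => by
      have hy' : |y| ≤ B := by simpa using (mem_ball_zero_iff.1 hy).le
      have := hu0 n
      rw [Real.norm_eq_abs, abs_mul, abs_mul, abs_pow, abs_of_nonneg (hu0 _), Nat.abs_cast]
      gcongr)
    (by simp [B]) (hu z) (by simp [B])
  refine key.congr_deriv ?_
  rw [hs2.tsum_eq_zero_add]
  simp

lemma hasSum_of_eq {f g : ℕ → ℝ} {s t : ℝ} (h : HasSum f s) (hfg : ∀ n, f n = g n)
    (hst : s = t) : HasSum g t := by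
  rwa [← funext hfg, ← hst]

/-- The `n`-th Taylor coefficient of `kummerM a b`. -/
noncomputable def kummerCoeff (a b : ℝ) (n : ℕ) : ℝ :=
  (ascPochhammer ℝ n).eval a / (ascPochhammer ℝ n).eval b / (n.factorial : ℝ)

lemma kummerM_eq (a b : ℝ) : kummerM a b = fun z => ∑' n, kummerCoeff a b n * z ^ n := by
  funext z
  unfold kummerM kummerCoeff
  refine tsum_congr fun n => ?_
  ring

lemma kummerCoeff_pos {a b : ℝ} (ha : 0 < a) (hb : 0 < b) (n : ℕ) : 0 < kummerCoeff a b n := by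
  unfold kummerCoeff
  have := ascPochhammer_pos n a ha
  have := ascPochhammer_pos n b hb
  positivity

lemma kummerCoeff_zero (a b : ℝ) : kummerCoeff a b 0 = 1 := by simp [kummerCoeff]

lemma kummerCoeff_succ {a b : ℝ} (hb : 0 < b) (n : ℕ) :
    (n + 1) * (b + n) * kummerCoeff a b (n + 1) = (a + n) * kummerCoeff a b n := by
  unfold kummerCoeff
  have := ascPochhammer_pos n b hb
  have : 0 < b + n := by positivity
  rw [ascPochhammer_succ_eval, ascPochhammer_succ_eval, Nat.factorial_succ]
  push_cast
  field_simp

/-- Lowering the first parameter: both sides are `(a - 1)(a)_n / ((b)_n n!)`. -/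
lemma kummerCoeff_sub_one_succ {a b : ℝ} (hb : 0 < b) (n : ℕ) :
    (n + 1) * (b + n) * kummerCoeff (a - 1) b (n + 1) = (a - 1) * kummerCoeff a b n := by
  unfold kummerCoeff
  have := ascPochhammer_pos n b hb
  have : 0 < b + n := by positivity
  rw [ascPochhammer_succ_eval n b, ascPochhammer_succ_left, Nat.factorial_succ]
  push_cast
  simp only [Polynomial.eval_mul, Polynomial.eval_X, Polynomial.eval_comp, Polynomial.eval_add,
    Polynomial.eval_one, sub_add_cancel]
  field_simp

lemma kummerCoeff_summable {a b : ℝ} (ha : 0 < a) (hb : 0 < b) (r : ℝ) :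
    Summable fun n => kummerCoeff a b n * r ^ n := by
  rcases eq_or_ne r 0 with rfl | hr
  · refine summable_of_ne_finset_zero (s := {0}) fun n hn => ?_
    simp at hn
    simp [hn]
  refine summable_of_ratio_test_tendsto_lt_one (l := 0) zero_lt_one
    (Filter.Eventually.of_forall fun n =>
      mul_ne_zero (kummerCoeff_pos ha hb n).ne' (pow_ne_zero _ hr)) ?_
  have hlim : Filter.Tendsto (fun n : ℕ => (a / b + 1) * |r| * (1 / ((n : ℝ) + 1)))
      Filter.atTop (nhds 0) := by
    simpa using (tendsto_one_div_add_atTop_nhds_zero_nat (𝕜 := ℝ)).const_mul ((a / b + 1) * |r|)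
  refine squeeze_zero (fun n => by positivity) (fun n => ?_) hlim
  have hp := kummerCoeff_pos ha hb n
  have hp1 := kummerCoeff_pos ha hb (n + 1)
  have hs := kummerCoeff_succ (a := a) hb n
  have hbn : 0 < b + n := by positivity
  have hr' : 0 < |r| := abs_pos.2 hr
  rw [Real.norm_eq_abs, Real.norm_eq_abs, abs_mul, abs_mul, abs_pow, abs_pow, abs_of_pos hp,
    abs_of_pos hp1, pow_succ]
  have e : kummerCoeff a b (n + 1) = (a + n) * kummerCoeff a b n / ((n + 1) * (b + n)) := by
    rw [← hs]; field_simp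
  have h1 : (a + n) / (b + n) ≤ a / b + 1 := by
    rw [div_add_one hb.ne', div_le_div_iff₀ hbn hb]
    have : 0 ≤ (n : ℝ) := n.cast_nonneg
    nlinarith [mul_nonneg ha.le this]
  calc _ = (a + n) / (b + n) * |r| * (1 / ((n : ℝ) + 1)) := by
        rw [e]; field_simp
    _ ≤ _ := by gcongr

/-- Positivity, two derivatives, Kummer's equation (multiplied by `z`), and the contiguous
relation `z M'(a) = (b - a) M(a - 1) + (a - b + z) M(a)`. -/
lemma kummerM_facts {a b : ℝ} (ha : 1 < a) (hb : 0 < b) :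
    ∃ M1 M2 : ℝ → ℝ, ∀ z : ℝ, 0 < z →
      0 < kummerM a b z ∧ HasDerivAt (kummerM a b) (M1 z) z ∧ HasDerivAt M1 (M2 z) z ∧
      z ^ 2 * M2 z + b * (z * M1 z) = z * (z * M1 z + a * kummerM a b z) ∧
      z * M1 z + (b - a) * kummerM a b z - (b - a) * kummerM (a - 1) b z
        = z * kummerM a b z := by
  have ha0 : 0 < a := by linarith
  have hu0 := fun n => (kummerCoeff_pos ha0 hb n).le
  obtain ⟨hs1, hd1⟩ := powerSeries_deriv _ hu0 (kummerCoeff_summable ha0 hb)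
  obtain ⟨hs2, hd2⟩ := powerSeries_deriv (fun n : ℕ => (n + 1 : ℝ) * kummerCoeff a b (n + 1))
    (fun n => mul_nonneg (by positivity) (hu0 _)) hs1
  refine ⟨_, _, fun z hz => ⟨?_, ?_, hd2 z, ?_, ?_⟩⟩
  · rw [kummerM_eq]
    exact (kummerCoeff_summable ha0 hb z).tsum_pos
      (fun n => mul_nonneg (hu0 n) (by positivity)) 0
      (mul_pos (kummerCoeff_pos ha0 hb 0) (by positivity))
  · rw [kummerM_eq]
    exact hd1 z
  all_goals
    have H0 : HasSum (fun n => kummerCoeff a b n * z ^ n) (kummerM a b z) := by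
      rw [kummerM_eq]
      exact (kummerCoeff_summable ha0 hb z).hasSum
    have H1 := (hs1 z).hasSum.mul_left z
    have H1' : HasSum (fun n : ℕ => (n : ℝ) * kummerCoeff a b n * z ^ n)
        (z * ∑' n : ℕ, ((n + 1 : ℝ) * kummerCoeff a b (n + 1)) * z ^ n) := by
      rw [← hasSum_nat_add_iff' 1]
      refine hasSum_of_eq H1 (fun n => ?_) ?_
      · push_cast; ring
      · simp
  · have H2 := (hs2 z).hasSum.mul_left (z ^ 2)
    have H2' := (((hasSum_nat_add_iff' 1).2 H1').mul_left b).add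
      ((hasSum_nat_add_iff' (f := fun n : ℕ => (n : ℝ) * (n - 1) * kummerCoeff a b n * z ^ n)
        (g := z ^ 2 * ∑' n : ℕ, ((n + 1 : ℝ) * ((((n + 1 : ℕ) : ℝ) + 1)
          * kummerCoeff a b (n + 1 + 1))) * z ^ n) 1).2 (by
        rw [← hasSum_nat_add_iff' 2]
        refine hasSum_of_eq H2 (fun n => ?_) ?_
        · push_cast; ring
        · simp [Finset.sum_range_succ]))
    have H3 := (H1'.add (H0.mul_left a)).mul_left z
    have := H2'.unique (by
      refine hasSum_of_eq H3 (fun n => ?_) rfl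
      have := kummerCoeff_succ (a := a) hb n
      push_cast
      rw [pow_succ]
      linear_combination -(z ^ n * z * this))
    simp at this
    push_cast
    linarith
  · have H4 : HasSum (fun n => kummerCoeff (a - 1) b n * z ^ n) (kummerM (a - 1) b z) := by
      rw [kummerM_eq]
      exact (kummerCoeff_summable (by linarith) hb z).hasSum
    have H5 := (hasSum_nat_add_iff' 1).2
      ((H1'.add (H0.mul_left (b - a))).sub (H4.mul_left (b - a)))
    have := H5.unique (by
      refine hasSum_of_eq (H0.mul_left z) (fun n => ?_) rfl
      have h1 := kummerCoeff_succ (a := a) hb n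
      have h2 := kummerCoeff_sub_one_succ (a := a) hb n
      have hbn : 0 < b + n := by positivity
      have hn : (0 : ℝ) < (n : ℝ) + 1 := by positivity
      push_cast
      rw [pow_succ]
      apply mul_left_cancel₀ (mul_pos hn hbn).ne'
      linear_combination -(z ^ n * z * ((n + 1 + (b - a)) * h1 - (b - a) * h2)))
    simp [kummerCoeff_zero] at this
    linarith

/-- The similarity profile `G`, with `f v t = G (Ψ v t)`: it is positive, satisfies
`z² G'' + (z² - 2 λ z) G' = (η² - (λ + 1/2)²) G`, and its logarithmic derivative is a quotient
of Whittaker functions. -/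
lemma profile_facts {lam η : ℝ} (hη : |lam + 1/2| < η) (G : ℝ → ℝ)
    (hG : ∀ z, G z = Real.Gamma (η - lam + 1/2) / Real.Gamma (2 * η + 1) *
        Real.exp (-z / 2) * z ^ lam * whittakerM lam η z) :
    ∃ G1 G2 : ℝ → ℝ, ∀ z : ℝ, 0 < z →
      0 < G z ∧ HasDerivAt G (G1 z) z ∧ HasDerivAt G1 (G2 z) z ∧
      z ^ 2 * G2 z + (z ^ 2 - 2 * lam * z) * G1 z = (η ^ 2 - (lam + 1/2) ^ 2) * G z ∧
      z * (G1 z / G z) = (η + lam + 1/2) * (whittakerM (lam + 1) η z / whittakerM lam η z) := by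
  obtain ⟨h1, h2⟩ := abs_lt.1 hη
  set a := η - lam + 1/2 with ha
  set b := 1 + 2 * η with hb
  set p := η + lam + 1/2 with hp
  have ha1 : 1 < a := by linarith
  have hb0 : 0 < b := by linarith
  obtain ⟨M1, M2, hM⟩ := kummerM_facts ha1 hb0
  set K := Real.Gamma a / Real.Gamma (2 * η + 1)
  have hK : 0 < K := div_pos (Real.Gamma_pos_of_pos (by linarith))
    (Real.Gamma_pos_of_pos (by linarith))
  have hGz : ∀ z, 0 < z → G z = K * Real.exp (-z) * z ^ p * kummerM a b z := by
    intro z hz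
    have e1 : z ^ p = z ^ lam * z ^ (η + 1/2) := by
      rw [← Real.rpow_add hz, hp]
      ring_nf
    have e2 : Real.exp (-z) = Real.exp (-z / 2) * Real.exp (-z / 2) := by
      rw [← Real.exp_add]
      ring_nf
    rw [hG, whittakerM, e1, e2, ← ha, ← hb]
    ring
  have hW : ∀ z, 0 < z → HasDerivAt (fun y => K * Real.exp (-y) * y ^ p)
      ((p / z - 1) * (K * Real.exp (-z) * z ^ p)) z := by
    intro z hz
    have e := ((hasDerivAt_neg z).exp.const_mul K).mul
      (Real.hasDerivAt_rpow_const (p := p) (Or.inl hz.ne'))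
    refine e.congr_deriv ?_
    rw [Real.rpow_sub hz, Real.rpow_one]
    field_simp
    ring
  have hM0 : ∀ z, 0 < z → 0 < K * Real.exp (-z) * z ^ p := fun z hz => by positivity
  set W : ℝ → ℝ := fun y => K * Real.exp (-y) * y ^ p with hWdef
  refine ⟨fun z => W z * ((p / z - 1) * kummerM a b z + M1 z),
    fun z => W z * ((p / z - 1) * ((p / z - 1) * kummerM a b z + M1 z)
      + (-(p / z ^ 2) * kummerM a b z + (p / z - 1) * M1 z + M2 z)), fun z hz => ?_⟩
  obtain ⟨hpos, hd1, hd2, hode, hcont⟩ := hM z hz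
  have hWz := hW z hz
  have hW0 : 0 < W z := hM0 z hz
  have hGz' : G z = W z * kummerM a b z := hGz z hz
  refine ⟨?_, ?_, ?_, ?_, ?_⟩
  · rw [hGz']; positivity
  · have e := hWz.mul hd1
    refine HasDerivAt.congr_of_eventuallyEq (f := fun y => W y * kummerM a b y) ?_ ?_
    · refine e.congr_deriv ?_
      simp only [hWdef]
      ring
    · filter_upwards [lt_mem_nhds hz] with y hy using hGz y hy
  · have hq : HasDerivAt (fun y : ℝ => p / y - 1) (-(p / z ^ 2)) z := by
      refine (((hasDerivAt_inv hz.ne').const_mul p).sub_const 1).congr_deriv ?_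
      ring
    refine (hWz.mul ((hq.mul hd1).add hd2)).congr_deriv ?_
    simp only [hWdef, Pi.mul_apply, Pi.add_apply]
    ring
  · rw [hGz']
    have hab : η ^ 2 - (lam + 1/2) ^ 2 = p * (p - 1 - 2 * lam) := by rw [hp]; ring
    rw [hab]
    have hla : a = b - p := by rw [ha, hb, hp]; ring
    have hlb : 2 * lam = 2 * p - b := by rw [hb, hp]; ring
    rw [hla] at hode
    rw [hlb]
    field_simp
    rw [hla]
    linear_combination hode
  · have hw : whittakerM (lam + 1) η z / whittakerM lam η z
        = kummerM (a - 1) b z / kummerM a b z := by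
      rw [whittakerM, whittakerM, ← ha, ← hb, show η - (lam + 1) + 1/2 = a - 1 by rw [ha]; ring]
      exact mul_div_mul_left _ _ (by positivity)
    rw [hw, hGz', mul_div_mul_left _ _ hW0.ne']
    have : b - a = p := by rw [ha, hb, hp]; ring
    rw [this] at hcont
    field_simp
    linear_combination hcont

/-- A positive function's real power `H = G ^ q`, with its first two derivatives written through
the logarithmic derivatives of `G`. -/
lemma rpow_two_derivs {G G1 G2 : ℝ → ℝ} (q : ℝ)
    (hG : ∀ z, 0 < z → 0 < G z ∧ HasDerivAt G (G1 z) z ∧ HasDerivAt G1 (G2 z) z)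
    {z : ℝ} (hz : 0 < z) :
    HasDerivAt (fun y => G y ^ q) (q * (G1 z / G z) * G z ^ q) z ∧
    HasDerivAt (fun y => q * (G1 y / G y) * G y ^ q)
      ((q * (G2 z / G z - (G1 z / G z) ^ 2) + q ^ 2 * (G1 z / G z) ^ 2) * G z ^ q) z := by
  obtain ⟨h0, h1, h2⟩ := hG z hz
  have e : HasDerivAt (fun y => G y ^ q) (q * (G1 z / G z) * G z ^ q) z := by
    refine (h1.rpow_const (p := q) (Or.inl h0.ne')).congr_deriv ?_
    rw [Real.rpow_sub h0, Real.rpow_one]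
    field_simp
  refine ⟨e, ?_⟩
  refine (((h2.div h1 h0.ne').const_mul q).mul e).congr_deriv ?_
  rw [Pi.div_apply]
  field_simp

/-- The algebra behind the linearization. With `L = G'/G` and `P = G''/G`, the exponent `1/δ`
and `ρ² = 1 - δ` make the terms in `L²` cancel, and the rest is the equation for the profile. -/
lemma hjb_algebra {μ ρ k Θ σ c δ A L P s h x v : ℝ} (hc : 0 < c) (hδ : 0 < δ) (hx : 0 < x)
    (hv : 0 < v) (hρ2 : ρ ^ 2 = 1 - δ)
    (hode : σ ^ 2 * (s * v) ^ 2 * P + (σ ^ 2 * (s * v) ^ 2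
        - 2 * (-(k * Θ) + ρ * σ * μ) * (s * v)) * L = μ ^ 2 * δ) :
    -(A / c * (1 / δ * L * h * (s * v * (k + σ ^ 2 * s / 2)))) +
      σ ^ 2 * v / 2 * -(A / c * ((1 / δ * (P - L ^ 2) + (1 / δ) ^ 2 * L ^ 2) * h * s * s)) +
      k * (Θ - v) * -(A / c * (1 / δ * L * h * s)) +
      A * h * (1 / (c * x) * (μ / v + ρ * σ / δ * (s * L)) * x *
        (μ + ρ * σ * v * (s * L) / δ) -
        c * v * (1 / (c * x) * (μ / v + ρ * σ / δ * (s * L)) * x) ^ 2 / 2) = 0 := by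
  have h1 : 1 / (c * x) * (μ / v + ρ * σ / δ * (s * L)) * x
      = (μ + ρ * σ * v * (s * L) / δ) / (c * v) := by
    field_simp
  rw [h1]
  have h2 : ∀ y : ℝ, y / (c * v) * y - c * v * (y / (c * v)) ^ 2 / 2 = y ^ 2 / (2 * (c * v)) := by
    intro y
    field_simp
    ring
  rw [h2]
  field_simp
  linear_combination (-A * h * δ) * hode + (A * h * σ ^ 2 * v ^ 2 * s ^ 2 * L ^ 2) * hρ2

theorem stmt_9 (μ ρ k Θ σ T : ℝ) (hσ : 0 < σ) (hk : 0 < k)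
    (hρ0 : 0 < |ρ|) (hρ1 : |ρ| < 1) (hμ : μ ≠ 0)
    (c : ℝ) (hc : 0 < c)
    (δ C : ℝ)
    (hδ : δ = 1 - ρ ^ 2)
    (hC : C = μ ^ 2 / 2 * δ)
    (lam η : ℝ)
    (hlam : lam = -(k * Θ) / σ ^ 2 + (1 - δ) * μ / (ρ * σ))
    (hη : η = Real.sqrt ((lam + 1/2) ^ 2 + 2 * C / σ ^ 2))
    (Ψ : ℝ → ℝ → ℝ)
    (hΨ : ∀ v t, Ψ v t = 2 * k * v / (σ ^ 2 * (Real.exp (k * (T - t)) - 1)))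
    (f : ℝ → ℝ → ℝ)
    (hf : ∀ v t, f v t =
      Real.Gamma (η - lam + 1/2) / Real.Gamma (2 * η + 1) *
        Real.exp (-(Ψ v t) / 2) * (Ψ v t) ^ lam * whittakerM lam η (Ψ v t))
    (J : ℝ → ℝ → ℝ → ℝ)
    (hJ : ∀ w v t, J w v t = 1 - Real.exp (-(c * w)) / c * (f v t) ^ (1 / δ)) :
    ∀ (w : ℝ) (x v t : ℝ), 0 < x → 0 < v → t < T →
      let Q : ℝ → ℝ := fun a =>
        a * μ * x * deriv (fun w' => J w' v t) w +
        a ^ 2 * x ^ 2 * v / 2 * deriv (fun w' => deriv (fun w'' => J w'' v t) w') w +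
        ρ * σ * v * a * x * deriv (fun v' => deriv (fun w' => J w' v' t) w) v
      let astar : ℝ := 1 / (c * x) *
        (μ / v + ρ * σ / δ * ((η + lam + 1/2) / v) *
          (whittakerM (lam + 1) η (Ψ v t) / whittakerM lam η (Ψ v t)))
      (deriv (fun t' => J w v t') t +
        σ ^ 2 * v / 2 * deriv (fun v' => deriv (fun v'' => J w v'' t) v') v +
        k * (Θ - v) * deriv (fun v' => J w v' t) v + Q astar = 0) ∧
      (∀ a : ℝ, Q a ≤ Q astar) := by
  intro w x v t hx hv ht Q astar
  have hρ : ρ ≠ 0 := abs_pos.1 hρ0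
  have hδ0 : 0 < δ := by
    rw [hδ]
    nlinarith [sq_abs ρ, abs_nonneg ρ]
  have hC0 : 0 < C := by rw [hC]; positivity
  have hrad : 0 < 2 * C / σ ^ 2 := by positivity
  have hη1 : |lam + 1/2| < η := by
    rw [hη, ← Real.sqrt_sq_eq_abs]
    exact Real.sqrt_lt_sqrt (sq_nonneg _) (by linarith)
  have hη2 : η ^ 2 - (lam + 1/2) ^ 2 = 2 * C / σ ^ 2 := by
    rw [hη, Real.sq_sqrt (by positivity)]
    ring
  obtain ⟨G, hG⟩ : ∃ G : ℝ → ℝ, ∀ z, G z = Real.Gamma (η - lam + 1/2) / Real.Gamma (2 * η + 1) *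
        Real.exp (-z / 2) * z ^ lam * whittakerM lam η z := ⟨_, fun _ => rfl⟩
  have hfG : ∀ v t, f v t = G (Ψ v t) := fun v t => by rw [hf, hG]
  obtain ⟨G1, G2, hprof⟩ := profile_facts hη1 G hG
  have hH := fun {z : ℝ} (hz : 0 < z) => rpow_two_derivs (1 / δ)
    (fun z hz => ⟨(hprof z hz).1, (hprof z hz).2.1, (hprof z hz).2.2.1⟩) hz
  set H : ℝ → ℝ := fun y => G y ^ (1 / δ) with hHdef
  set H1 : ℝ → ℝ := fun y => 1 / δ * (G1 y / G y) * G y ^ (1 / δ) with hH1def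
  -- for fixed `t`, the similarity variable is `Ψ v t = s v` with slope `s`
  set E := Real.exp (k * (T - t)) with hE
  have hE1 : 0 < E - 1 := by
    have : 1 < E := Real.one_lt_exp_iff.2 (mul_pos hk (by linarith))
    linarith
  set s := 2 * k / (σ ^ 2 * (E - 1)) with hs
  have hs0 : 0 < s := by positivity
  have hΨv : ∀ v', Ψ v' t = s * v' := fun v' => by rw [hΨ, hs]; ring
  have hz : 0 < Ψ v t := by rw [hΨv]; positivity
  set z := Ψ v t with hzdef
  have hzs : z = s * v := hΨv v
  obtain ⟨hG0, hd1, hd2, hode, hlog⟩ := hprof z hz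
  set A := Real.exp (-(c * w)) with hA
  have hA0 : 0 < A := Real.exp_pos _
  have hJ' : ∀ w v t, J w v t = 1 - Real.exp (-(c * w)) / c * H (Ψ v t) := fun w v t => by
    rw [hJ, hfG]
  have hexp : ∀ w', HasDerivAt (fun y : ℝ => Real.exp (-(c * y))) (-c * Real.exp (-(c * w'))) w' := by
    intro w'
    have h := ((hasDerivAt_id' w').const_mul c).fun_neg.exp
    exact h.congr_deriv (by ring)
  have hJw : ∀ v' w', deriv (fun w'' => J w'' v' t) w' = Real.exp (-(c * w')) * H (Ψ v' t) := by
    intro v' w'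
    simp only [hJ']
    have := (((hexp w').div_const c).mul_const (H (Ψ v' t))).const_sub 1
    rw [this.deriv]
    field_simp
  have hJww : deriv (fun w' => deriv (fun w'' => J w'' v t) w') w = -c * A * H z := by
    simp only [hJw]
    exact ((hexp w).mul_const _).deriv
  have hline : ∀ v', HasDerivAt (fun y => s * y) s v' := fun v' => by
    simpa using (hasDerivAt_id v').const_mul s
  have hHv : ∀ v', 0 < v' → HasDerivAt (fun y => H (Ψ y t)) (H1 (s * v') * s) v' := by
    intro v' hv'
    simp only [hΨv]
    exact (hH (mul_pos hs0 hv')).1.comp v' (hline v')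
  have hJwv : deriv (fun v' => deriv (fun w' => J w' v' t) w) v = A * (H1 z * s) := by
    simp only [hJw]
    rw [hzs]
    exact ((hHv v hv).const_mul _).deriv
  have hJv : ∀ v', 0 < v' → deriv (fun v'' => J w v'' t) v' = -(A / c * (H1 (s * v') * s)) := by
    intro v' hv'
    simp only [hJ']
    exact (((hHv v' hv').const_mul _).const_sub 1).deriv
  have hJvv : deriv (fun v' => deriv (fun v'' => J w v'' t) v') v =
      -(A / c * (((1 / δ * (G2 z / G z - (G1 z / G z) ^ 2) + (1 / δ) ^ 2 * (G1 z / G z) ^ 2)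
        * H z) * s * s)) := by
    have hev : (fun v' => deriv (fun v'' => J w v'' t) v') =ᶠ[nhds v]
        fun v' => -(A / c * (H1 (s * v') * s)) := by
      filter_upwards [lt_mem_nhds hv] with y hy using hJv y hy
    rw [hev.deriv_eq]
    have h2 := (hH hz).2
    rw [hzs] at h2 ⊢
    exact (((h2.comp v (hline v)).mul_const s).const_mul (A / c)).neg.deriv
  have hΨt : HasDerivAt (fun t' => Ψ v t') (z * (k + σ ^ 2 * s / 2)) t := by
    simp only [hΨ]
    have hEt : HasDerivAt (fun y : ℝ => Real.exp (k * (T - y))) (-k * E) t := by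
      have h := (((hasDerivAt_id' t).const_sub T).const_mul k).exp
      exact h.congr_deriv (by rw [hE]; ring)
    have hne : σ ^ 2 * (Real.exp (k * (T - t)) - 1) ≠ 0 := by positivity
    refine ((((hEt.sub_const 1).const_mul (σ ^ 2)).fun_inv hne).const_mul
      (2 * k * v)).congr_deriv ?_
    rw [hzs, hs, ← hE]
    field_simp
    ring
  have hJt : deriv (fun t' => J w v t') t = -(A / c * (H1 z * (z * (k + σ ^ 2 * s / 2)))) := by
    simp only [hJ']
    exact ((((hH hz).1.comp t hΨt).const_mul _).const_sub 1).deriv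
  set L := G1 z / G z with hL
  set P := G2 z / G z with hP
  have hH0 : 0 < H z := Real.rpow_pos_of_pos hG0 _
  have hH1z : H1 z = 1 / δ * L * H z := rfl
  have hodeLP : z ^ 2 * P + (z ^ 2 - 2 * lam * z) * L = 2 * C / σ ^ 2 := by
    have hL' : L * G z = G1 z := div_mul_cancel₀ _ hG0.ne'
    have hP' : P * G z = G2 z := div_mul_cancel₀ _ hG0.ne'
    rw [← hη2]
    apply mul_right_cancel₀ hG0.ne'
    linear_combination hode + z ^ 2 * hP' + (z ^ 2 - 2 * lam * z) * hL'
  have hastar : astar = 1 / (c * x) * (μ / v + ρ * σ / δ * (s * L)) := by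
    have : (η + lam + 1/2) / v * (whittakerM (lam + 1) η z / whittakerM lam η z) = s * L := by
      rw [div_mul_eq_mul_div, ← hlog, hzs]
      field_simp
    simp only [astar]
    rw [mul_assoc (ρ * σ / δ), this]
  have hQ : ∀ a, Q a = A * H z *
      (a * x * (μ + ρ * σ * v * (s * L) / δ) - c * v * (a * x) ^ 2 / 2) := by
    intro a
    simp only [Q]
    rw [hJww, hJw, hJwv, hH1z]
    ring
  constructor
  · rw [hJt, hJvv, hJv v hv, ← hzs, hH1z, hQ, hastar]
    nth_rewrite 2 [hzs]
    have hlam' : lam * σ ^ 2 = -(k * Θ) + ρ * σ * μ := by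
      rw [hlam, show 1 - δ = ρ ^ 2 by rw [hδ]; ring]
      field_simp
    have hρ2 : ρ ^ 2 = 1 - δ := by rw [hδ]; ring
    rw [hzs, hC] at hodeLP
    have hode' : σ ^ 2 * (s * v) ^ 2 * P + (σ ^ 2 * (s * v) ^ 2
        - 2 * (-(k * Θ) + ρ * σ * μ) * (s * v)) * L = μ ^ 2 * δ := by
      rw [← hlam']
      field_simp at hodeLP
      linear_combination hodeLP
    exact hjb_algebra hc hδ0 hx hv hρ2 hode'
  · -- completing the square about the vertex `astar` of the concave quadratic `Q`
    intro a
    have hvertex : μ + ρ * σ * v * (s * L) / δ = c * v * (astar * x) := by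
      rw [hastar]
      clear_value L s
      field_simp
    rw [hQ, hQ, hvertex]
    apply mul_le_mul_of_nonneg_left _ (by positivity)
    have := mul_nonneg (mul_pos hc hv).le (sq_nonneg (a * x - astar * x))
    clear_value astar
    linarith
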